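/- arXiv:1701.06264 — 3 statements merged into one kernel-verified Lean document; each statement's English description precedes it below -/
import Mathlib

section
/- Let n ≥ 1, λ > 0 and κ > 0. Let p and q be Lipschitz probability densities on ℝⁿ, both vanishing outside a compact set D. Suppose L* : ℝⁿ → ℝ is nonnegative and κ-Lipschitz and satisfies: (a) S(L*; p, q) ≤ S(L; p, q) for every nonnegative κ-Lipschitz function L : ℝⁿ → ℝ, and (b) ∫ L*(z) q(z) dz ≤ ∫ L*(x) p(x) dx. Then p(x) ≥ (λ/(1+λ)) q(x) for Lebesgue-almost every x, and consequently ∫ |p(x) − q(x)| dx ≤ 2/λ. (Paper's Lemma 1: distributional consistency of the LS-GAN at a Nash equilibrium.) -/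
open MeasureTheory

/-- The LS-GAN objective `S(L; p, q)`:
`S(L; p, q) = ∫ L(x) p(x) dx + lam * ∬ (‖x − z‖ + L(x) − L(z))₊ p(x) q(z) dx dz`. -/
noncomputable def lsganS (n : ℕ) (lam : ℝ)
    (L p q : EuclideanSpace ℝ (Fin n) → ℝ) : ℝ :=
  (∫ x, L x * p x) +
    lam * ∫ x, ∫ z, max (‖x - z‖ + L x - L z) 0 * (p x * q z)

section Aux

variable {n : ℕ} {p q : EuclideanSpace ℝ (Fin n) → ℝ}

theorem continuous_of_abs_sub_le {f : EuclideanSpace ℝ (Fin n) → ℝ} {K : ℝ}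
    (h : ∀ x z, |f x - f z| ≤ K * ‖x - z‖) : Continuous f := by
  refine (LipschitzWith.of_dist_le_mul (K := K.toNNReal) fun x z => ?_).continuous
  rw [Real.dist_eq, dist_eq_norm]
  exact (h x z).trans (by gcongr; exact Real.le_coe_toNNReal K)

theorem integrable_mul_of_compactSupport {f : EuclideanSpace ℝ (Fin n) → ℝ} (hf : Continuous f)
    (hp : Continuous p) (hps : HasCompactSupport p) : Integrable fun x => f x * p x :=
  (hf.mul hp).integrable_of_hasCompactSupport hps.mul_left

theorem integrable_mul_prod_of_compactSupport
    {f : EuclideanSpace ℝ (Fin n) × EuclideanSpace ℝ (Fin n) → ℝ} (hf : Continuous f)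
    (hp : Continuous p) (hq : Continuous q)
    (hps : HasCompactSupport p) (hqs : HasCompactSupport q) :
    Integrable (fun w => f w * (p w.1 * q w.2)) (volume.prod volume) := by
  refine Continuous.integrable_of_hasCompactSupport (by fun_prop) ?_
  refine HasCompactSupport.intro (hps.isCompact.prod hqs.isCompact) fun w hw => ?_
  rw [Set.mem_prod, not_and_or] at hw
  rcases hw with h | h <;> simp [image_eq_zero_of_notMem_tsupport h]

/-- Without the positive part, the margin term splits into the mean distance between `p` and `q`
plus the difference of the means of `f`. -/
theorem integral_margin_eq {f : EuclideanSpace ℝ (Fin n) → ℝ} (hf : Continuous f)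
    (hp : Continuous p) (hq : Continuous q)
    (hps : HasCompactSupport p) (hqs : HasCompactSupport q)
    (hp_int : (∫ x, p x) = 1) (hq_int : (∫ x, q x) = 1) :
    (∫ w, (‖w.1 - w.2‖ + f w.1 - f w.2) * (p w.1 * q w.2) ∂(volume.prod volume)) =
      (∫ w, ‖w.1 - w.2‖ * (p w.1 * q w.2) ∂(volume.prod volume)) +
        (∫ x, f x * p x) - ∫ z, f z * q z := by
  have h₁ : (∫ w, f w.1 * (p w.1 * q w.2) ∂(volume.prod volume)) = ∫ x, f x * p x := by
    have h := integral_prod_mul (μ := volume) (ν := volume) (fun x => f x * p x) q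
    rw [hq_int, mul_one] at h
    simpa only [mul_assoc] using h
  have h₂ : (∫ w, f w.2 * (p w.1 * q w.2) ∂(volume.prod volume)) = ∫ z, f z * q z := by
    have h := integral_prod_mul (μ := volume) (ν := volume) p (fun z => f z * q z)
    rw [hp_int, one_mul] at h
    simpa only [mul_left_comm] using h
  have i₀ := integrable_mul_prod_of_compactSupport (f := fun w => ‖w.1 - w.2‖)
    (by fun_prop) hp hq hps hqs
  have i₁ := integrable_mul_prod_of_compactSupport (f := fun w => f w.1)
    (by fun_prop) hp hq hps hqs
  have i₂ := integrable_mul_prod_of_compactSupport (f := fun w => f w.2)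
    (by fun_prop) hp hq hps hqs
  simp only [sub_mul, add_mul]
  rw [integral_sub (i₀.fun_add i₁) i₂, integral_add i₀ i₁, h₁, h₂]

theorem lsganS_eq_prod {lam : ℝ} {f : EuclideanSpace ℝ (Fin n) → ℝ} (hf : Continuous f)
    (hp : Continuous p) (hq : Continuous q)
    (hps : HasCompactSupport p) (hqs : HasCompactSupport q) :
    lsganS n lam f p q = (∫ x, f x * p x) + lam *
      ∫ w, max (‖w.1 - w.2‖ + f w.1 - f w.2) 0 * (p w.1 * q w.2) ∂(volume.prod volume) := by
  rw [lsganS, integral_prod _ (integrable_mul_prod_of_compactSupport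
    (f := fun w => max (‖w.1 - w.2‖ + f w.1 - f w.2) 0) (by fun_prop) hp hq hps hqs)]

theorem le_lsganS {lam : ℝ} (hlam : 0 ≤ lam) {f : EuclideanSpace ℝ (Fin n) → ℝ}
    (hf : Continuous f) (hp : Continuous p) (hq : Continuous q)
    (hps : HasCompactSupport p) (hqs : HasCompactSupport q)
    (hp_int : (∫ x, p x) = 1) (hq_int : (∫ x, q x) = 1)
    (hp_nonneg : ∀ x, 0 ≤ p x) (hq_nonneg : ∀ x, 0 ≤ q x) :
    (∫ x, f x * p x) + lam * ((∫ w, ‖w.1 - w.2‖ * (p w.1 * q w.2) ∂(volume.prod volume)) +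
      (∫ x, f x * p x) - ∫ z, f z * q z) ≤ lsganS n lam f p q := by
  rw [lsganS_eq_prod hf hp hq hps hqs, ← integral_margin_eq hf hp hq hps hqs hp_int hq_int]
  refine add_le_add le_rfl (mul_le_mul_of_nonneg_left ?_ hlam)
  refine integral_mono
    (integrable_mul_prod_of_compactSupport (f := fun w => ‖w.1 - w.2‖ + f w.1 - f w.2)
      (by fun_prop) hp hq hps hqs)
    (integrable_mul_prod_of_compactSupport (f := fun w => max (‖w.1 - w.2‖ + f w.1 - f w.2) 0)
      (by fun_prop) hp hq hps hqs) fun w => ?_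
  exact mul_le_mul_of_nonneg_right (le_max_left _ _)
    (mul_nonneg (hp_nonneg _) (hq_nonneg _))

theorem lsganS_eq_of_one_lipschitz {lam : ℝ} {f : EuclideanSpace ℝ (Fin n) → ℝ}
    (hf : ∀ x z, |f x - f z| ≤ ‖x - z‖) (hp : Continuous p) (hq : Continuous q)
    (hps : HasCompactSupport p) (hqs : HasCompactSupport q)
    (hp_int : (∫ x, p x) = 1) (hq_int : (∫ x, q x) = 1) :
    lsganS n lam f p q =
      (∫ x, f x * p x) + lam * ((∫ w, ‖w.1 - w.2‖ * (p w.1 * q w.2) ∂(volume.prod volume)) +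
        (∫ x, f x * p x) - ∫ z, f z * q z) := by
  have hfc : Continuous f := continuous_of_abs_sub_le (K := 1) (by simpa using hf)
  rw [lsganS_eq_prod hfc hp hq hps hqs, ← integral_margin_eq hfc hp hq hps hqs hp_int hq_int]
  congr 3
  funext w
  rw [max_eq_left (by linarith [neg_le_of_abs_le (hf w.1 w.2)])]

end Aux

/-- **Paper's Lemma 1**: distributional consistency of the LS-GAN at a Nash equilibrium.
If `L` is a nonnegative κ-Lipschitz minimizer of `S(·; p, q)` over nonnegative κ-Lipschitz
functions and `∫ L q ≤ ∫ L p`, then `p ≥ (λ/(1+λ)) q` a.e. and `∫ |p − q| ≤ 2/λ`. -/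
theorem lsgan_distributional_consistency
    (n : ℕ) (hn : 1 ≤ n)
    (D : Set (EuclideanSpace ℝ (Fin n))) (hD : IsCompact D)
    (lam κ : ℝ) (hlam : 0 < lam) (hκ : 0 < κ)
    (p q : EuclideanSpace ℝ (Fin n) → ℝ)
    (hp_meas : Measurable p) (hp_nonneg : ∀ x, 0 ≤ p x)
    (hp_int : (∫ x, p x) = 1)
    (hp_lip : ∃ κp : ℝ, ∀ x z, |p x - p z| ≤ κp * ‖x - z‖)
    (hp_supp : ∀ x, x ∉ D → p x = 0)
    (hq_meas : Measurable q) (hq_nonneg : ∀ x, 0 ≤ q x)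
    (hq_int : (∫ x, q x) = 1)
    (hq_lip : ∃ κq : ℝ, ∀ x z, |q x - q z| ≤ κq * ‖x - z‖)
    (hq_supp : ∀ x, x ∉ D → q x = 0)
    (L : EuclideanSpace ℝ (Fin n) → ℝ)
    (hL_nonneg : ∀ x, 0 ≤ L x)
    (hL_lip : ∀ x z, |L x - L z| ≤ κ * ‖x - z‖)
    (ha : ∀ L' : EuclideanSpace ℝ (Fin n) → ℝ,
      (∀ x, 0 ≤ L' x) → (∀ x z, |L' x - L' z| ≤ κ * ‖x - z‖) →
      lsganS n lam L p q ≤ lsganS n lam L' p q)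
    (hb : (∫ z, L z * q z) ≤ ∫ x, L x * p x) :
    (∀ᵐ x : EuclideanSpace ℝ (Fin n), lam / (1 + lam) * q x ≤ p x) ∧
      (∫ x, |p x - q x|) ≤ 2 / lam := by
  obtain ⟨κp, hκp⟩ := hp_lip
  obtain ⟨κq, hκq⟩ := hq_lip
  have hp := continuous_of_abs_sub_le hκp
  have hq := continuous_of_abs_sub_le hκq
  have hL := continuous_of_abs_sub_le hL_lip
  have hps : HasCompactSupport p := HasCompactSupport.intro hD hp_supp
  have hqs : HasCompactSupport q := HasCompactSupport.intro hD hq_supp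
  have hlow := le_lsganS hlam.le hL hp hq hps hqs hp_int hq_int hp_nonneg hq_nonneg
  have hLp : 0 ≤ ∫ x, L x * p x :=
    integral_nonneg fun x => mul_nonneg (hL_nonneg x) (hp_nonneg x)
  let f : EuclideanSpace ℝ (Fin n) → ℝ := fun x => max (lam * q x - (1 + lam) * p x) 0
  let K : ℝ := lam * |κq| + (1 + lam) * |κp|
  have hK : 0 ≤ K := by positivity
  have hf_lip : ∀ x z, |f x - f z| ≤ K * ‖x - z‖ := fun x z => by
    have hqz := (hκq x z).trans (mul_le_mul_of_nonneg_right (le_abs_self κq) (norm_nonneg _))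
    have hpz := (hκp x z).trans (mul_le_mul_of_nonneg_right (le_abs_self κp) (norm_nonneg _))
    calc |f x - f z|
        ≤ |(lam * q x - (1 + lam) * p x) - (lam * q z - (1 + lam) * p z)| :=
          abs_max_sub_max_le_abs _ _ _
      _ = |lam * (q x - q z) - (1 + lam) * (p x - p z)| := by ring_nf
      _ ≤ |lam * (q x - q z)| + |(1 + lam) * (p x - p z)| := abs_sub _ _
      _ = lam * |q x - q z| + (1 + lam) * |p x - p z| := by
          rw [abs_mul, abs_mul, abs_of_pos hlam, abs_of_pos (by linarith : 0 < 1 + lam)]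
      _ ≤ lam * (|κq| * ‖x - z‖) + (1 + lam) * (|κp| * ‖x - z‖) := by gcongr
      _ = K * ‖x - z‖ := by ring
  have hf := continuous_of_abs_sub_le hf_lip
  let ε : ℝ := min κ 1 / (K + 1)
  have hε : 0 < ε := by positivity
  have hg_lip : ∀ x z, |ε * f x - ε * f z| ≤ min κ 1 * ‖x - z‖ := fun x z => by
    have hεK : ε * K ≤ min κ 1 := by
      rw [div_mul_eq_mul_div, div_le_iff₀ (by positivity)]
      gcongr
      linarith
    rw [← mul_sub, abs_mul, abs_of_pos hε]
    calc ε * |f x - f z| ≤ ε * (K * ‖x - z‖) := by gcongr; exact hf_lip x z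
      _ = ε * K * ‖x - z‖ := by ring
      _ ≤ min κ 1 * ‖x - z‖ := by gcongr
  have hmin := ha (fun x => ε * f x) (fun x => mul_nonneg hε.le (le_max_right _ _))
    fun x z => (hg_lip x z).trans (by gcongr; exact min_le_left _ _)
  rw [lsganS_eq_of_one_lipschitz (fun x z => (hg_lip x z).trans
    (mul_le_of_le_one_left (norm_nonneg _) (min_le_right _ _))) hp hq hps hqs hp_int hq_int]
    at hmin
  have ifp := integrable_mul_of_compactSupport hf hp hps
  have ifq := integrable_mul_of_compactSupport hf hq hqs
  have hsq : (fun x => f x * f x) = fun x => lam * (f x * q x) - (1 + lam) * (f x * p x) := by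
    funext x
    rcases max_choice (lam * q x - (1 + lam) * p x) 0 with h | h
    · change f x = _ at h
      linear_combination f x * h
    · change f x = 0 at h
      simp [h]
  have hf_sq : Integrable fun x => f x * f x := by
    rw [hsq]
    exact (ifq.const_mul _).sub (ifp.const_mul _)
  have hsq_int : (∫ x, f x * f x) = lam * (∫ x, f x * q x) - (1 + lam) * ∫ x, f x * p x := by
    rw [hsq, integral_sub (ifq.const_mul _) (ifp.const_mul _), integral_const_mul,
      integral_const_mul]
  have hsq_nonpos : (∫ x, f x * f x) ≤ 0 := by
    simp only [mul_assoc, integral_const_mul] at hmin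
    have hgap := mul_nonneg hlam.le (sub_nonneg.2 hb)
    refine nonpos_of_mul_nonpos_right (a := ε) ?_ hε
    rw [hsq_int]
    linarith
  have hmain : ∀ᵐ x, lam * q x ≤ (1 + lam) * p x := by
    have h0 := (integral_eq_zero_iff_of_nonneg (fun x => mul_self_nonneg (f x)) hf_sq).1
      (hsq_nonpos.antisymm (integral_nonneg fun x => mul_self_nonneg (f x)))
    filter_upwards [h0] with x hx
    have hfx : f x = 0 := mul_self_eq_zero.1 hx
    have hle : lam * q x - (1 + lam) * p x ≤ f x := le_max_left _ _
    linarith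
  refine ⟨hmain.mono fun x hx => ?_, ?_⟩
  · rw [div_mul_eq_mul_div, div_le_iff₀ (by linarith)]
    linarith
  · have ip : Integrable p := hp.integrable_of_hasCompactSupport hps
    have iq : Integrable q := hq.integrable_of_hasCompactSupport hqs
    calc (∫ x, |p x - q x|) ≤ ∫ x, (p x - q x) + 2 / lam * p x := by
          refine integral_mono_ae (ip.sub iq).abs ((ip.sub iq).add (ip.const_mul _)) ?_
          filter_upwards [hmain] with x hx
          have hdiff : q x - p x ≤ p x / lam := by
            rw [le_div_iff₀ hlam]
            linarith
          have hp_div : 0 ≤ p x / lam := div_nonneg (hp_nonneg x) hlam.le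
          have hdouble : 2 / lam * p x = 2 * (p x / lam) := by ring
          change |p x - q x| ≤ (p x - q x) + 2 / lam * p x
          rw [hdouble, abs_le]
          constructor <;> linarith
      _ = 2 / lam := by
          rw [integral_add (ip.sub' iq) (ip.const_mul _), integral_sub ip iq, integral_const_mul,
            hp_int, hq_int]
          ring
end

section
/- Let C : ℝ → ℝ be a continuous function satisfying C(a) ≥ a for all a ∈ ℝ and C(a) = a for all a ≥ 0. Let p and q be Lipschitz probability densities on ℝⁿ, both vanishing outside a compact set, let κ > 0, and define S_C(L) = ∬ C(‖x − z‖ + L(x) − L(z)) p(x) q(z) dx dz. Suppose L* : ℝⁿ → ℝ is nonnegative and κ-Lipschitz, satisfies S_C(L*) ≤ S_C(L) for every nonnegative κ-Lipschitz function L : ℝⁿ → ℝ, and satisfies ∫ L*(z) q(z) dz ≤ ∫ L*(x) p(x) dx. Then ∫ |p(x) − q(x)| dx = 0; that is, p = q Lebesgue-almost everywhere. (Paper's Lemma 5: distributional consistency of the Generalized LS-GAN for any admissible cost function C.) -/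
open MeasureTheory

/-- The GLS-GAN objective `S_C(L) = ∬ C(‖x − z‖ + L(x) − L(z)) p(x) q(z) dx dz`. -/
noncomputable def glsganS (n : ℕ) (C : ℝ → ℝ)
    (L p q : EuclideanSpace ℝ (Fin n) → ℝ) : ℝ :=
  ∫ x, ∫ z, C (‖x - z‖ + L x - L z) * (p x * q z)

theorem continuous_of_abs_sub_le_mul_norm {E : Type*} [SeminormedAddCommGroup E] {f : E → ℝ}
    {K : ℝ} (hf : ∀ x z, |f x - f z| ≤ K * ‖x - z‖) : Continuous f := by
  refine (LipschitzWith.of_dist_le_mul (K := K.toNNReal) fun x z => ?_).continuous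
  rw [Real.dist_eq, dist_eq_norm]
  exact (hf x z).trans (mul_le_mul_of_nonneg_right (Real.le_coe_toNNReal K) (norm_nonneg _))

section

variable {n : ℕ} {C : ℝ → ℝ} {D : Set (EuclideanSpace ℝ (Fin n))}
  {L p q : EuclideanSpace ℝ (Fin n) → ℝ}

theorem integrable_mul_of_eq_zero_off_compact (hD : IsCompact D) (hL : Continuous L)
    (hp : Continuous p) (hpD : ∀ x, x ∉ D → p x = 0) : Integrable fun x => L x * p x :=
  (hL.mul hp).integrable_of_hasCompactSupport
    (HasCompactSupport.intro hD fun x hx => by simp [hpD x hx])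

theorem integrable_glsganS (hC : Continuous C) (hD : IsCompact D) (hL : Continuous L)
    (hp : Continuous p) (hpD : ∀ x, x ∉ D → p x = 0)
    (hq : Continuous q) (hqD : ∀ x, x ∉ D → q x = 0) :
    Integrable (fun w : EuclideanSpace ℝ (Fin n) × EuclideanSpace ℝ (Fin n) =>
      C (‖w.1 - w.2‖ + L w.1 - L w.2) * (p w.1 * q w.2)) (volume.prod volume) := by
  refine Continuous.integrable_of_hasCompactSupport (by fun_prop)
    (HasCompactSupport.intro (hD.prod hD) fun w hw => ?_)
  by_cases h : w.1 ∈ D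
  · simp [hqD w.2 fun h' => hw ⟨h, h'⟩]
  · simp [hpD w.1 h]

theorem glsganS_eq_integral_prod (hC : Continuous C) (hD : IsCompact D) (hL : Continuous L)
    (hp : Continuous p) (hpD : ∀ x, x ∉ D → p x = 0)
    (hq : Continuous q) (hqD : ∀ x, x ∉ D → q x = 0) :
    glsganS n C L p q =
      ∫ w : EuclideanSpace ℝ (Fin n) × EuclideanSpace ℝ (Fin n),
        C (‖w.1 - w.2‖ + L w.1 - L w.2) * (p w.1 * q w.2) ∂(volume.prod volume) :=
  (integral_prod _ (integrable_glsganS hC hD hL hp hpD hq hqD)).symm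

/-- For the identity cost the objective is affine in the loss function. -/
theorem glsganS_id (hD : IsCompact D) (hL : Continuous L)
    (hp : Continuous p) (hpD : ∀ x, x ∉ D → p x = 0) (hp_int : ∫ x, p x = 1)
    (hq : Continuous q) (hqD : ∀ x, x ∉ D → q x = 0) (hq_int : ∫ x, q x = 1) :
    glsganS n id L p q =
      glsganS n id (fun _ => 0) p q + ((∫ x, L x * p x) - ∫ z, L z * q z) := by
  have hp' : Integrable p := by
    simpa using integrable_mul_of_eq_zero_off_compact (L := fun _ => 1) hD continuous_const hp hpD
  have hq' : Integrable q := by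
    simpa using integrable_mul_of_eq_zero_off_compact (L := fun _ => 1) hD continuous_const hq hqD
  have hLp := integrable_mul_of_eq_zero_off_compact hD hL hp hpD
  have hLq := integrable_mul_of_eq_zero_off_compact hD hL hq hqD
  have hW := integrable_glsganS (L := fun _ => 0) continuous_id hD continuous_const hp hpD hq hqD
  have h₁ : ∫ w : EuclideanSpace ℝ (Fin n) × EuclideanSpace ℝ (Fin n),
      (L w.1 * p w.1) * q w.2 ∂(volume.prod volume) = ∫ x, L x * p x := by
    rw [integral_prod_mul (fun x => L x * p x) q, hq_int, mul_one]
  have h₂ : ∫ w : EuclideanSpace ℝ (Fin n) × EuclideanSpace ℝ (Fin n),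
      p w.1 * (L w.2 * q w.2) ∂(volume.prod volume) = ∫ z, L z * q z := by
    rw [integral_prod_mul p (fun z => L z * q z), hp_int, one_mul]
  rw [glsganS_eq_integral_prod continuous_id hD hL hp hpD hq hqD,
    glsganS_eq_integral_prod continuous_id hD continuous_const hp hpD hq hqD, ← h₁, ← h₂,
    ← integral_sub (hLp.mul_prod hq') (hp'.mul_prod hLq),
    ← integral_add hW ((hLp.mul_prod hq').sub' (hp'.mul_prod hLq))]
  congr 1 with w
  simp only [id]
  ring

theorem glsganS_id_le (hC : Continuous C) (hC_ge : ∀ a, a ≤ C a) (hD : IsCompact D)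
    (hL : Continuous L)
    (hp : Continuous p) (hp0 : ∀ x, 0 ≤ p x) (hpD : ∀ x, x ∉ D → p x = 0)
    (hq : Continuous q) (hq0 : ∀ x, 0 ≤ q x) (hqD : ∀ x, x ∉ D → q x = 0) :
    glsganS n id L p q ≤ glsganS n C L p q := by
  rw [glsganS_eq_integral_prod continuous_id hD hL hp hpD hq hqD,
    glsganS_eq_integral_prod hC hD hL hp hpD hq hqD]
  exact integral_mono (integrable_glsganS continuous_id hD hL hp hpD hq hqD)
    (integrable_glsganS hC hD hL hp hpD hq hqD)
    fun w => mul_le_mul_of_nonneg_right (hC_ge _) (mul_nonneg (hp0 _) (hq0 _))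

theorem glsganS_eq_glsganS_id (hC_eq : ∀ a, 0 ≤ a → C a = a)
    (hL : ∀ x z, |L x - L z| ≤ ‖x - z‖) : glsganS n C L p q = glsganS n id L p q := by
  unfold glsganS
  congr! 4 with x z
  rw [id, hC_eq _ (by linarith [neg_le_of_abs_le (hL x z)])]

end

/-- **Paper's Lemma 5**: distributional consistency of the Generalized LS-GAN for any
admissible cost function `C` (continuous, `C(a) ≥ a` everywhere, `C(a) = a` for `a ≥ 0`).
At a Nash equilibrium the generated density `q` equals the data density `p` a.e. -/
theorem glsgan_distributional_consistency
    (n : ℕ) (C : ℝ → ℝ) (hC_cont : Continuous C)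
    (hC_ge : ∀ a : ℝ, a ≤ C a) (hC_eq : ∀ a : ℝ, 0 ≤ a → C a = a)
    (D : Set (EuclideanSpace ℝ (Fin n))) (hD : IsCompact D)
    (κ : ℝ) (hκ : 0 < κ)
    (p q : EuclideanSpace ℝ (Fin n) → ℝ)
    (hp_meas : Measurable p) (hp_nonneg : ∀ x, 0 ≤ p x)
    (hp_int : (∫ x, p x) = 1)
    (hp_lip : ∃ κp : ℝ, ∀ x z, |p x - p z| ≤ κp * ‖x - z‖)
    (hp_supp : ∀ x, x ∉ D → p x = 0)
    (hq_meas : Measurable q) (hq_nonneg : ∀ x, 0 ≤ q x)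
    (hq_int : (∫ x, q x) = 1)
    (hq_lip : ∃ κq : ℝ, ∀ x z, |q x - q z| ≤ κq * ‖x - z‖)
    (hq_supp : ∀ x, x ∉ D → q x = 0)
    (L : EuclideanSpace ℝ (Fin n) → ℝ)
    (hL_nonneg : ∀ x, 0 ≤ L x)
    (hL_lip : ∀ x z, |L x - L z| ≤ κ * ‖x - z‖)
    (hmin : ∀ L' : EuclideanSpace ℝ (Fin n) → ℝ,
      (∀ x, 0 ≤ L' x) → (∀ x z, |L' x - L' z| ≤ κ * ‖x - z‖) →
      glsganS n C L p q ≤ glsganS n C L' p q)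
    (hgen : (∫ z, L z * q z) ≤ ∫ x, L x * p x) :
    (∫ x, |p x - q x|) = 0 ∧ p =ᵐ[volume] q := by
  obtain ⟨κp, hκp⟩ := hp_lip
  obtain ⟨κq, hκq⟩ := hq_lip
  have hp := continuous_of_abs_sub_le_mul_norm hκp
  have hq := continuous_of_abs_sub_le_mul_norm hκq
  have hL := continuous_of_abs_sub_le_mul_norm hL_lip
  have hp' : Integrable p := .of_integral_ne_zero (by simp [hp_int])
  have hq' : Integrable q := .of_integral_ne_zero (by simp [hq_int])
  -- The competitor is `ε (q - p)⁺`, with `ε` making it both `κ`-Lipschitz and `1`-Lipschitz.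
  set M : ℝ := |κp| + |κq| + 1
  have hM : 0 < M := by positivity
  set ε : ℝ := min κ 1 / M
  have hε : 0 < ε := div_pos (lt_min hκ one_pos) hM
  have hεM : ε * M = min κ 1 := div_mul_cancel₀ _ hM.ne'
  set f : EuclideanSpace ℝ (Fin n) → ℝ := fun x => max (q x - p x) 0
  have hf : Continuous f := by fun_prop
  have hf_lip : ∀ x z, |ε * f x - ε * f z| ≤ min κ 1 * ‖x - z‖ := by
    intro x z
    have h₁ : |f x - f z| ≤ |(q x - p x) - (q z - p z)| := abs_max_sub_max_le_abs _ _ _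
    have h₂ : |(q x - p x) - (q z - p z)| ≤ |q x - q z| + |p x - p z| := by
      rw [show (q x - p x) - (q z - p z) = (q x - q z) - (p x - p z) by ring]
      exact abs_sub _ _
    have h₃ : |f x - f z| ≤ M * ‖x - z‖ := by
      have h := norm_nonneg (x - z)
      have h₄ := mul_le_mul_of_nonneg_right (le_abs_self κp) h
      have h₅ := mul_le_mul_of_nonneg_right (le_abs_self κq) h
      have h₆ := hκp x z
      have h₇ := hκq x z
      simp only [M, add_mul]
      linarith
    rw [← mul_sub, abs_mul, abs_of_pos hε, ← hεM, mul_assoc]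
    exact mul_le_mul_of_nonneg_left h₃ hε.le
  have hS : glsganS n id L p q ≤ glsganS n id (fun x => ε * f x) p q := by
    rw [← glsganS_eq_glsganS_id (C := C) hC_eq fun x z => (hf_lip x z).trans
      ((mul_le_mul_of_nonneg_right (min_le_right _ _) (norm_nonneg _)).trans_eq (one_mul _))]
    exact (glsganS_id_le hC_cont hC_ge hD hL hp hp_nonneg hp_supp hq hq_nonneg hq_supp).trans
      (hmin _ (fun x => mul_nonneg hε.le (le_max_right _ _)) fun x z => (hf_lip x z).trans
        (mul_le_mul_of_nonneg_right (min_le_left _ _) (norm_nonneg _)))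
  rw [glsganS_id hD hL hp hp_supp hp_int hq hq_supp hq_int,
    glsganS_id hD (hf.const_mul ε) hp hp_supp hp_int hq hq_supp hq_int] at hS
  have hfp := integrable_mul_of_eq_zero_off_compact hD (hf.const_mul ε) hp hp_supp
  have hfq := integrable_mul_of_eq_zero_off_compact hD (hf.const_mul ε) hq hq_supp
  have hsq : ∀ x, ε * f x * q x - ε * f x * p x = ε * f x ^ 2 := by
    intro x
    simp only [f]
    rcases le_total (q x - p x) 0 with h | h
    · simp [max_eq_right h]
    · rw [max_eq_left h]
      ring
  have hf_int : Integrable fun x => ε * f x ^ 2 := by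
    simpa only [hsq] using hfq.sub' hfp
  have hf_nonneg : ∀ x, 0 ≤ ε * f x ^ 2 := fun x => by positivity
  have hf_zero : ∫ x, ε * f x ^ 2 = 0 := by
    refine le_antisymm ?_ (integral_nonneg hf_nonneg)
    simp only [← hsq]
    rw [integral_sub hfq hfp]
    linarith
  have hqp : q ≤ᵐ[volume] p := by
    filter_upwards [(integral_eq_zero_iff_of_nonneg hf_nonneg hf_int).1 hf_zero] with x hx
    have hfx : f x = 0 := by simpa [hε.ne'] using hx
    have := (le_max_left (q x - p x) 0).trans_eq hfx
    linarith
  have hpq : p =ᵐ[volume] q :=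
    ((integral_eq_iff_of_ae_le hq' hp' hqp).1 (hq_int.trans hp_int.symm)).symm
  refine ⟨integral_eq_zero_of_ae ?_, hpq⟩
  filter_upwards [hpq] with x hx
  simp [hx]
end

section
/- Suppose L0 ∈ F_κ minimizes S_m over F_κ, and set l_i = L0(x^(i)) for i = 1,…,2m. Define ĥL(x) = max_{1≤i≤2m} (l_i − κ d(x, x^(i)))_+ and t̃L(x) = min_{1≤i≤2m} (l_i + κ d(x, x^(i))). Then ĥL and t̃L both belong to F_κ, they satisfy ĥL(x^(i)) = t̃L(x^(i)) = l_i for every i = 1,…,2m, and both ĥL and t̃L minimize S_m over F_κ. (Paper's Theorem 6: non-parametric characterization of optimal LS-GAN loss functions.) -/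
/-- `Fκ κ` is the class of nonnegative κ-Lipschitz functions on a metric space. -/
def Fkappa {X : Type*} [MetricSpace X] (κ : ℝ) : Set (X → ℝ) :=
  {L | (∀ x, 0 ≤ L x) ∧ ∀ x z, |L x - L z| ≤ κ * dist x z}

/-- The empirical LS-GAN objective on `2m` points `xs` (the first `m` real, the last `m`
generated): `S_m(L) = (1/m) Σᵢ L(x⁽ⁱ⁾) + (λ/m) Σᵢ (d(x⁽ⁱ⁾, x⁽ᵐ⁺ⁱ⁾) + L(x⁽ⁱ⁾) − L(x⁽ᵐ⁺ⁱ⁾))₊`. -/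
noncomputable def empiricalS {X : Type*} [MetricSpace X] (lam : ℝ) (m : ℕ)
    (xs : Fin (m + m) → X) (L : X → ℝ) : ℝ :=
  (1 / (m : ℝ)) * ∑ i : Fin m, L (xs (Fin.castAdd m i)) +
    (lam / (m : ℝ)) * ∑ i : Fin m,
      max (dist (xs (Fin.castAdd m i)) (xs (Fin.natAdd m i)) +
        L (xs (Fin.castAdd m i)) - L (xs (Fin.natAdd m i))) 0

theorem mem_Fkappa_of_le_add {X : Type*} [MetricSpace X] {κ : ℝ} {L : X → ℝ}
    (hnonneg : ∀ x, 0 ≤ L x) (hle : ∀ x z, L x ≤ L z + κ * dist x z) : L ∈ Fkappa κ := by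
  refine ⟨hnonneg, fun x z => abs_sub_le_iff.2 ⟨?_, ?_⟩⟩
  · linarith [hle x z]
  · have h := hle z x
    rw [dist_comm] at h
    linarith

theorem le_add_of_mem_Fkappa {X : Type*} [MetricSpace X] {κ : ℝ} {L : X → ℝ}
    (hL : L ∈ Fkappa κ) (x z : X) : L x ≤ L z + κ * dist x z := by
  linarith [(abs_sub_le_iff.1 (hL.2 x z)).1]

theorem iSup_mem_Fkappa {X ι : Type*} [MetricSpace X] [Finite ι] [Nonempty ι] {κ : ℝ}
    {f : ι → X → ℝ} (hf : ∀ i, f i ∈ Fkappa κ) : (fun x => ⨆ i, f i x) ∈ Fkappa κ :=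
  mem_Fkappa_of_le_add (fun x => Real.iSup_nonneg fun i => (hf i).1 x) fun x z =>
    ciSup_le fun i => (le_add_of_mem_Fkappa (hf i) x z).trans <|
      add_le_add_left (le_ciSup (f := fun i => f i z) (Set.finite_range _).bddAbove i) _

theorem iInf_mem_Fkappa {X ι : Type*} [MetricSpace X] [Finite ι] [Nonempty ι] {κ : ℝ}
    {f : ι → X → ℝ} (hf : ∀ i, f i ∈ Fkappa κ) : (fun x => ⨅ i, f i x) ∈ Fkappa κ := by
  refine mem_Fkappa_of_le_add (fun x => Real.iInf_nonneg fun i => (hf i).1 x) fun x z => ?_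
  refine sub_le_iff_le_add.1 (le_ciInf fun i => sub_le_iff_le_add.2 ?_)
  exact (ciInf_le (f := fun i => f i x) (Set.finite_range _).bddBelow i).trans
    (le_add_of_mem_Fkappa (hf i) x z)

theorem lowerCone_mem_Fkappa {X : Type*} [MetricSpace X] {κ : ℝ} (hκ : 0 ≤ κ) (l : ℝ) (p : X) :
    (fun x => max (l - κ * dist x p) 0) ∈ Fkappa κ := by
  refine mem_Fkappa_of_le_add (fun x => le_max_right _ _) fun x z => ?_
  have htri := mul_le_mul_of_nonneg_left (dist_triangle_left z p x) hκ
  have hdist : 0 ≤ κ * dist x z := by positivity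
  refine max_le ?_ ?_
  · linarith [le_max_left (l - κ * dist z p) 0]
  · linarith [le_max_right (l - κ * dist z p) 0]

theorem upperCone_mem_Fkappa {X : Type*} [MetricSpace X] {κ : ℝ} (hκ : 0 ≤ κ) {l : ℝ}
    (hl : 0 ≤ l) (p : X) : (fun x => l + κ * dist x p) ∈ Fkappa κ := by
  refine mem_Fkappa_of_le_add (fun x => by positivity) fun x z => ?_
  linarith [mul_le_mul_of_nonneg_left (dist_triangle x z p) hκ]

theorem iSup_lowerCone_apply {X ι : Type*} [MetricSpace X] [Finite ι] {κ : ℝ} {L : X → ℝ}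
    (hL : L ∈ Fkappa κ) (xs : ι → X) (j : ι) :
    (⨆ i, max (L (xs i) - κ * dist (xs j) (xs i)) 0) = L (xs j) := by
  have : Nonempty ι := ⟨j⟩
  refine le_antisymm (ciSup_le fun i => max_le ?_ (hL.1 _)) ?_
  · rw [dist_comm]
    linarith [le_add_of_mem_Fkappa hL (xs i) (xs j)]
  · refine le_ciSup_of_le (Set.finite_range _).bddAbove j ?_
    simp

theorem iInf_upperCone_apply {X ι : Type*} [MetricSpace X] [Finite ι] {κ : ℝ} {L : X → ℝ}
    (hL : L ∈ Fkappa κ) (xs : ι → X) (j : ι) :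
    (⨅ i, (L (xs i) + κ * dist (xs j) (xs i))) = L (xs j) := by
  have : Nonempty ι := ⟨j⟩
  refine le_antisymm ?_ (le_ciInf fun i => le_add_of_mem_Fkappa hL (xs j) (xs i))
  refine ciInf_le_of_le (Set.finite_range _).bddBelow j ?_
  simp

/-- The objective depends only on the values at the data points. -/
theorem empiricalS_congr {X : Type*} [MetricSpace X] (lam : ℝ) {m : ℕ} {xs : Fin (m + m) → X}
    {L L' : X → ℝ} (h : ∀ j, L (xs j) = L' (xs j)) :
    empiricalS lam m xs L = empiricalS lam m xs L' := by
  simp only [empiricalS, h]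

/-- **Paper's Theorem 6**: non-parametric characterization of optimal LS-GAN loss
functions. If `L0 ∈ F_κ` minimizes `S_m`, then the cone-shaped functions
`ĥL(x) = maxᵢ (L0(x⁽ⁱ⁾) − κ d(x, x⁽ⁱ⁾))₊` and `t̃L(x) = minᵢ (L0(x⁽ⁱ⁾) + κ d(x, x⁽ⁱ⁾))`
belong to `F_κ`, coincide with `L0` on the data points, and also minimize `S_m`. -/
theorem lsgan_nonparametric_characterization
    {X : Type*} [MetricSpace X] (κ lam : ℝ) (hκ : 0 < κ) (hlam : 0 < lam)
    (m : ℕ) (hm : 0 < m) (xs : Fin (m + m) → X)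
    (L0 : X → ℝ) (hL0 : L0 ∈ Fkappa κ)
    (hmin : ∀ L ∈ Fkappa κ, empiricalS lam m xs L0 ≤ empiricalS lam m xs L) :
    (fun x => ⨆ i : Fin (m + m), max (L0 (xs i) - κ * dist x (xs i)) 0) ∈ Fkappa κ ∧
    (fun x => ⨅ i : Fin (m + m), (L0 (xs i) + κ * dist x (xs i))) ∈ Fkappa κ ∧
    (∀ j : Fin (m + m),
      (⨆ i : Fin (m + m), max (L0 (xs i) - κ * dist (xs j) (xs i)) 0) = L0 (xs j)) ∧
    (∀ j : Fin (m + m),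
      (⨅ i : Fin (m + m), (L0 (xs i) + κ * dist (xs j) (xs i))) = L0 (xs j)) ∧
    (∀ L ∈ Fkappa κ,
      empiricalS lam m xs (fun x => ⨆ i : Fin (m + m), max (L0 (xs i) - κ * dist x (xs i)) 0)
        ≤ empiricalS lam m xs L) ∧
    (∀ L ∈ Fkappa κ,
      empiricalS lam m xs (fun x => ⨅ i : Fin (m + m), (L0 (xs i) + κ * dist x (xs i)))
        ≤ empiricalS lam m xs L) := by
  have : Nonempty (Fin (m + m)) := ⟨⟨0, by omega⟩⟩
  have hsup := iSup_lowerCone_apply hL0 xs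
  have hinf := iInf_upperCone_apply hL0 xs
  refine ⟨iSup_mem_Fkappa fun i => lowerCone_mem_Fkappa hκ.le _ _,
    iInf_mem_Fkappa fun i => upperCone_mem_Fkappa hκ.le (hL0.1 _) _,
    hsup, hinf, fun L hL => ?_, fun L hL => ?_⟩
  · exact (empiricalS_congr lam hsup).trans_le (hmin L hL)
  · exact (empiricalS_congr lam hinf).trans_le (hmin L hL)
end
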